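/- Let Z, Z' ∈ {0,1}^{n×K} be cluster membership matrices such that every cluster under Z and every cluster under Z' has size exactly n/K (so K divides n), and let C = ZZ^T, C' = Z'Z'^T. Then δ̃(C, C') ≤ (4/K) δ(Z, Z'). -/

import Mathlib

open Matrix BigOperators

/-- A cluster membership matrix: entries in {0,1}, every row has exactly one entry equal to 1. -/
def IsClusterMembership {n K : ℕ} (Z : Matrix (Fin n) (Fin K) ℝ) : Prop :=
  (∀ i k, Z i k = 0 ∨ Z i k = 1) ∧ ∀ i, ∃! k, Z i k = 1

/-- The size of cluster k under Z. -/
noncomputable def clusterSize {n K : ℕ} (Z : Matrix (Fin n) (Fin K) ℝ) (k : Fin K) : ℕ :=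
  (Finset.univ.filter fun i => Z i k = 1).card

/-- The permutation matrix associated to a permutation of `Fin K`. -/
def permMat {K : ℕ} (q : Equiv.Perm (Fin K)) : Matrix (Fin K) (Fin K) ℝ :=
  Matrix.of fun i j => if q i = j then 1 else 0

/-- The entrywise ℓ0 "norm": the number of nonzero entries of a matrix. -/
noncomputable def zeroNorm {n K : ℕ} (A : Matrix (Fin n) (Fin K) ℝ) : ℕ :=
  (Finset.univ.filter fun p : Fin n × Fin K => A p.1 p.2 ≠ 0).card

/-- δ(Z,Z') = (1/n) · min over K×K permutation matrices Q of ‖ZQ − Z'‖₀. -/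
noncomputable def deltaZ {n K : ℕ} (Z Z' : Matrix (Fin n) (Fin K) ℝ) : ℝ :=
  (1 / (n : ℝ)) * (Finset.univ.inf' ⟨1, Finset.mem_univ 1⟩
    fun q : Equiv.Perm (Fin K) => ((zeroNorm (Z * permMat q - Z') : ℕ) : ℝ))

/-- δ̃(C,C') = (1/n²) ‖C − C'‖_F². -/
noncomputable def deltaTilde {n : ℕ} (C C' : Matrix (Fin n) (Fin n) ℝ) : ℝ :=
  (1 / ((n : ℝ))^2) * ∑ i, ∑ j, (C i j - C' i j)^2

/-- A cluster membership matrix is the indicator matrix of a labelling. -/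
lemma IsClusterMembership.exists_label {n K : ℕ} {Z : Matrix (Fin n) (Fin K) ℝ}
    (hZ : IsClusterMembership Z) :
    ∃ z : Fin n → Fin K, Z = Matrix.of fun i k => if z i = k then 1 else 0 := by
  choose z hz hz' using hZ.2
  refine ⟨z, ?_⟩
  ext i k
  by_cases h : z i = k
  · subst h
    simpa using hz i
  · rcases hZ.1 i k with h0 | h1
    · simpa [h] using h0
    · exact absurd (hz' i k h1).symm h

lemma indicator_mul_transpose_apply {n K : ℕ} (z : Fin n → Fin K) (i j : Fin n) :
    ((Matrix.of fun i k => if z i = k then (1 : ℝ) else 0) *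
      (Matrix.of fun i k => if z i = k then (1 : ℝ) else 0)ᵀ) i j =
      if z j = z i then 1 else 0 := by
  simp [Matrix.mul_apply, eq_comm]

/-- The number of mislabelled rows is at most the number of differing entries. -/
lemma card_ne_le_zeroNorm {n K : ℕ} (z z' : Fin n → Fin K) (q : Equiv.Perm (Fin K)) :
    (Finset.univ.filter fun i => q (z i) ≠ z' i).card ≤
      zeroNorm ((Matrix.of fun i k => if z i = k then (1 : ℝ) else 0) * permMat q -
        Matrix.of fun i k => if z' i = k then (1 : ℝ) else 0) := by
  refine Finset.card_le_card_of_injOn (fun i => (i, z' i)) ?_ ?_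
  · intro i hi
    have hi : q (z i) ≠ z' i := by simpa using hi
    have hsum : (∑ x, if q x = z' i then if z i = x then (1 : ℝ) else 0 else 0) = 0 :=
      Finset.sum_eq_zero fun x _ => by
        split_ifs with h₁ h₂
        · exact absurd (h₂ ▸ h₁) hi
        · rfl
        · rfl
    simp [Matrix.mul_apply, permMat, hsum]
  · intro i _ j _ h
    exact congrArg Prod.fst h

/-- Two clusterings with clusters of size `m` whose labels disagree, up to `q`, on a set of
points differ on at most `4 m` pairs per disagreeing point. -/
lemma sum_sq_sub_le {n K m : ℕ} (z z' : Fin n → Fin K) (q : Equiv.Perm (Fin K))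
    (hz : ∀ k, (Finset.univ.filter fun i => z i = k).card = m)
    (hz' : ∀ k, (Finset.univ.filter fun i => z' i = k).card = m) :
    ∑ i, ∑ j, ((if z j = z i then (1 : ℝ) else 0) - if z' j = z' i then 1 else 0) ^ 2 ≤
      4 * (m : ℝ) * ((Finset.univ.filter fun i => q (z i) ≠ z' i).card : ℝ) := by
  set f : Fin n → Fin n → ℝ := fun i j =>
    (if q (z i) ≠ z' i then 1 else 0) *
      ((if z j = z i then 1 else 0) + if z' j = z' i then 1 else 0) with hf
  have hrow : ∑ i, ∑ j, f i j =
      2 * m * (Finset.univ.filter fun i => q (z i) ≠ z' i).card := by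
    have hone : ∀ i, ∑ j, f i j = 2 * m * if q (z i) ≠ z' i then 1 else 0 := by
      intro i
      simp only [hf, ← Finset.mul_sum, Finset.sum_add_distrib, Finset.sum_boole, hz, hz']
      ring
    simp only [hone, ← Finset.mul_sum, Finset.sum_boole]
  have hpair : ∀ i j, ((if z j = z i then (1 : ℝ) else 0) -
      if z' j = z' i then 1 else 0) ^ 2 ≤ f i j + f j i := by
    intro i j
    have hsymm : f j i = (if q (z j) ≠ z' j then 1 else 0) *
        ((if z j = z i then 1 else 0) + if z' j = z' i then 1 else 0) := by
      simp only [hf, eq_comm (a := z i), eq_comm (a := z' i) (b := z' j)]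
    rw [hsymm]
    by_cases hi : q (z i) = z' i
    · by_cases hj : q (z j) = z' j
      · simp [hf, ← hi, ← hj]
      · simp only [hf]
        split_ifs <;> norm_num
    · simp only [hf]
      split_ifs <;> norm_num
  calc _ ≤ ∑ i, ∑ j, (f i j + f j i) :=
        Finset.sum_le_sum fun i _ => Finset.sum_le_sum fun j _ => hpair i j
    _ = ∑ i, ∑ j, f i j + ∑ i, ∑ j, f i j := by
        simp only [Finset.sum_add_distrib]
        rw [Finset.sum_comm (f := fun i j => f j i)]
    _ = _ := by rw [hrow]; ring

/-- if all clusters under Z and Z' have size exactly n/K (with K ∣ n), then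
δ̃(ZZᵀ, Z'Z'ᵀ) ≤ (4/K) δ(Z, Z'). -/
theorem deltaTilde_le_four_div_K_mul_deltaZ {n K : ℕ}
    (Z Z' : Matrix (Fin n) (Fin K) ℝ)
    (hZ : IsClusterMembership Z) (hZ' : IsClusterMembership Z')
    (hdvd : K ∣ n)
    (hsizeZ : ∀ k, clusterSize Z k = n / K)
    (hsizeZ' : ∀ k, clusterSize Z' k = n / K) :
    deltaTilde (Z * Zᵀ) (Z' * Z'ᵀ) ≤ (4 / (K : ℝ)) * deltaZ Z Z' := by
  obtain ⟨z, rfl⟩ := hZ.exists_label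
  obtain ⟨z', rfl⟩ := hZ'.exists_label
  rcases Nat.eq_zero_or_pos n with rfl | hn
  · simp [deltaTilde, deltaZ]
  obtain ⟨m, rfl⟩ := hdvd
  have hK : 0 < K := Nat.pos_of_mul_pos_right hn
  have hm : 0 < m := Nat.pos_of_mul_pos_left hn
  rw [Nat.mul_div_cancel_left m hK] at hsizeZ hsizeZ'
  have hz : ∀ k, (Finset.univ.filter fun i => z i = k).card = m := by
    simpa [clusterSize] using hsizeZ
  have hz' : ∀ k, (Finset.univ.filter fun i => z' i = k).card = m := by
    simpa [clusterSize] using hsizeZ'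
  unfold deltaTilde deltaZ
  obtain ⟨q, -, hq⟩ := Finset.exists_mem_eq_inf' (s := Finset.univ) ⟨1, Finset.mem_univ 1⟩
    fun q : Equiv.Perm (Fin K) =>
      ((zeroNorm ((Matrix.of fun i k => if z i = k then (1 : ℝ) else 0) * permMat q -
        Matrix.of fun i k => if z' i = k then (1 : ℝ) else 0) : ℕ) : ℝ)
  rw [hq]
  simp only [indicator_mul_transpose_apply]
  have hcard : ((Finset.univ.filter fun i => q (z i) ≠ z' i).card : ℝ) ≤
      (zeroNorm ((Matrix.of fun i k => if z i = k then (1 : ℝ) else 0) * permMat q -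
        Matrix.of fun i k => if z' i = k then (1 : ℝ) else 0) : ℕ) :=
    Nat.cast_le.mpr (card_ne_le_zeroNorm z z' q)
  generalize zeroNorm _ = N at hcard ⊢
  have hK' : (0 : ℝ) < K := by exact_mod_cast hK
  have hm' : (0 : ℝ) < m := by exact_mod_cast hm
  calc _ ≤ 1 / ((K * m : ℕ) : ℝ) ^ 2 * (4 * m * N) :=
        mul_le_mul_of_nonneg_left ((sum_sq_sub_le z z' q hz hz').trans
          (mul_le_mul_of_nonneg_left hcard (by positivity))) (by positivity)
    _ = _ := by
        push_cast
        field_simp
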